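/- Let A be an ω×ω monic segmented first entries matrix with entries from ω and let C be a central subset of (ℕ,·). Then there exists x ∈ ℕ^ω such that x^A ∈ C^ω, i.e., every entry of x^A lies in C. -/

import Mathlib

/- `ℕ+` plays the role of the paper's `ℕ = {1,2,3,…}`.  `Ultrafilter ℕ+` is `βℕ`. -/

/-- Product of ultrafilters: `U ∈ umul p q ↔ {x | {y | x*y ∈ U} ∈ q} ∈ p`. -/
def umul (p q : Ultrafilter ℕ+) : Ultrafilter ℕ+ :=
  p.bind fun x => q.map fun y => x * y

/-- Sum of ultrafilters: `U ∈ uadd p q ↔ {x | {y | x+y ∈ U} ∈ q} ∈ p`. -/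
def uadd (p q : Ultrafilter ℕ+) : Ultrafilter ℕ+ :=
  p.bind fun x => q.map fun y => x + y

/-- The matrix-vector product `Ax` (computed in `ℚ`) of a row-finite matrix `A`
with a vector `x` of positive integers. -/
noncomputable def mulVecQ {ι κ : Type} (A : ι → κ → ℚ) (x : κ → ℕ+) : ι → ℚ :=
  fun i => ∑ᶠ j, A i j * ((x j : ℕ) : ℚ)

/-- All entries of the vector `y` are (positive) natural numbers lying in `P`. -/
def entriesIn {ι : Type} (y : ι → ℚ) (P : Set ℕ+) : Prop :=
  ∀ i, ∃ n ∈ P, y i = ((n : ℕ) : ℚ)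

/-- `A` is image partition regular: for every finite coloring of `ℕ` there is
a vector `x` over `ℕ` all entries of whose image `Ax` are monochromatic. -/
def IPR {ι κ : Type} (A : ι → κ → ℚ) : Prop :=
  ∀ (r : ℕ) (c : ℕ+ → Fin r), ∃ (k : Fin r) (x : κ → ℕ+),
    entriesIn (mulVecQ A x) {n | c n = k}

/-- `I(A) = {p ∈ βℕ : for every P ∈ p there is x over ℕ with all entries of Ax in P}`. -/
def ISet {ι κ : Type} (A : ι → κ → ℚ) : Set (Ultrafilter ℕ+) :=
  {p | ∀ P ∈ p, ∃ x : κ → ℕ+, entriesIn (mulVecQ A x) P}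

/-- A left ideal of `(βℕ,·)`: a nonempty set `L` with `βℕ · L ⊆ L`. -/
def IsLeftIdealMul (L : Set (Ultrafilter ℕ+)) : Prop :=
  L.Nonempty ∧ ∀ p q, q ∈ L → umul p q ∈ L

/-- A minimal left ideal of `(βℕ,·)`. -/
def IsMinimalLeftIdealMul (L : Set (Ultrafilter ℕ+)) : Prop :=
  IsLeftIdealMul L ∧ ∀ L', IsLeftIdealMul L' → L' ⊆ L → L' = L

/-- `K(βℕ,·)`, the union of all minimal left ideals of `(βℕ,·)`. -/
def KMul : Set (Ultrafilter ℕ+) :=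
  {p | ∃ L, IsMinimalLeftIdealMul L ∧ p ∈ L}

/-- `C ⊆ ℕ` is central in `(ℕ,·)`: `C` belongs to some idempotent of `K(βℕ,·)`. -/
def IsCentralMul (C : Set ℕ+) : Prop :=
  ∃ p : Ultrafilter ℕ+, umul p p = p ∧ p ∈ KMul ∧ C ∈ p

/-- `A i j` is the first (leftmost) nonzero entry of row `i`. -/
def FirstEntryAt {u v : ℕ} (A : Fin u → Fin v → ℚ) (i : Fin u) (j : Fin v) : Prop :=
  A i j ≠ 0 ∧ ∀ j' < j, A i j' = 0

/-- Definition 2.10(a): `A` is a first entries matrix. -/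
def IsFirstEntries {u v : ℕ} (A : Fin u → Fin v → ℚ) : Prop :=
  (∀ i, ∃ j, A i j ≠ 0) ∧
  (∀ i j, FirstEntryAt A i j → 0 < A i j) ∧
  (∀ i i' j, FirstEntryAt A i j → FirstEntryAt A i' j → A i j = A i' j)

/-- A first entries matrix is monic when all its first entries equal `1`. -/
def IsMonic {u v : ℕ} (A : Fin u → Fin v → ℚ) : Prop :=
  ∀ i j, FirstEntryAt A i j → A i j = 1

/-- Definition 2.10(b): `A` is a monic segmented first entries matrix: no row of `A`
is zero, `A` is row-finite, and there is an increasing sequence `α` with `α 0 = 0`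
such that for each `n` the set of nonzero rows of the block of columns
`α n, …, α (n+1) - 1` is empty or is precisely the set of rows of a finite image
partition regular monic first entries matrix. -/
def MonicSegmentedFE (A : ℕ → ℕ → ℚ) : Prop :=
  (∀ i, ∃ j, A i j ≠ 0) ∧ (∀ i, {j | A i j ≠ 0}.Finite) ∧
  ∃ α : ℕ → ℕ, α 0 = 0 ∧ StrictMono α ∧
    ∀ n, ∃ (u : ℕ) (F : Fin u → Fin (α (n+1) - α n) → ℚ),
      IPR F ∧ IsFirstEntries F ∧ IsMonic F ∧
      {row : Fin (α (n+1) - α n) → ℚ |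
          row ≠ 0 ∧ ∃ i, row = fun t : Fin (α (n+1) - α n) => A i (α n + (t : ℕ))} = Set.range F

/-!
Let `p` be an idempotent in a minimal left ideal, with `C ∈ p`. Minimality makes every member of `p`
piecewise syndetic, so by the Hales–Jewett theorem it contains a translate `a * ∏ n ∈ H, y n k`,
`k ∈ κ`, for any sequence of finite families `y n : κ → M`. Idempotency lets one choose finite
sets successively so that all products of elements from distinct sets stay in a given member of `p`.
For a finite monic first entries matrix, combine the two by induction on the number of
columns: rows starting with `0` are handled by a product of solutions for the remaining columns, and
the translate `a` becomes the entry of `x` for the first column, which the other rows contain to the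
power `1`. Idempotency then glues the solutions for the successive blocks of columns.
-/

theorem exists_mul_mul_eq_of_isAtom {S : Type*} [Semigroup S] {L : SubMulAction S S}
    (hL : IsAtom L) {p : S} (hp : p ∈ L) (q : S) : ∃ r, r * (q * p) = p := by
  let principal : SubMulAction S S :=
    { carrier := Set.range (· * (q * p))
      smul_mem' := by
        rintro s _ ⟨r, rfl⟩
        exact ⟨s * r, mul_assoc s r _⟩ }
  have principal_le : principal ≤ L := by
    rintro _ ⟨r, rfl⟩
    exact L.smul_mem r (L.smul_mem q hp)
  have principal_ne_bot : principal ≠ ⊥ := fun h =>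
    (h ▸ ⟨p, rfl⟩ : p * (q * p) ∈ (⊥ : SubMulAction S S))
  have principal_eq : principal = L := (hL.le_iff.1 principal_le).resolve_left principal_ne_bot
  rw [← principal_eq] at hp
  exact hp

section Central

open Filter

attribute [local instance] Ultrafilter.semigroup

/-- Central subsets of a semigroup: members of an idempotent ultrafilter lying in a minimal left
ideal. Left ideals are encoded as sub-actions of left multiplication; as `⊥` is the empty one,
the minimal left ideals are the atoms. -/
def IsCentralSet {M : Type*} [Semigroup M] (C : Set M) : Prop :=
  ∃ p : Ultrafilter M, IsIdempotentElem p ∧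
    (∃ L : SubMulAction (Ultrafilter M) (Ultrafilter M), IsAtom L ∧ p ∈ L) ∧ C ∈ p

theorem exists_finset_forall_exists_mem_of_forall_ultrafilter {ι α : Type*} {B : ι → Set α}
    (hB : ∀ q : Ultrafilter α, ∃ i, B i ∈ q) : ∃ G : Finset ι, ∀ a, ∃ i ∈ G, a ∈ B i := by
  obtain ⟨G, hG⟩ := isCompact_univ.elim_finite_subcover (fun i => {q : Ultrafilter α | B i ∈ q})
    (fun i => ultrafilter_isOpen_basic (B i)) fun q _ => Set.mem_iUnion.2 (hB q)
  refine ⟨G, fun a => ?_⟩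
  obtain ⟨i, hi, ha⟩ := Set.mem_iUnion₂.1 (hG (Set.mem_univ (pure a)))
  exact ⟨i, hi, Ultrafilter.mem_pure.1 ha⟩

/-- Members of an ultrafilter in a minimal left ideal are piecewise syndetic. -/
theorem exists_finset_forall_eventually_mul_mul_mem {M : Type*} [Semigroup M] {p : Ultrafilter M}
    {L : SubMulAction (Ultrafilter M) (Ultrafilter M)} (hL : IsAtom L) (hp : p ∈ L) {P : Set M}
    (hP : P ∈ p) : ∃ G : Finset M, ∀ s, ∃ t ∈ G, ∀ᶠ a in p, t * (s * a) ∈ P := by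
  refine exists_finset_forall_exists_mem_of_forall_ultrafilter
    (B := fun t => {s | ∀ᶠ a in p, t * (s * a) ∈ P}) fun q => ?_
  obtain ⟨r, hr⟩ := exists_mul_mul_eq_of_isAtom hL hp q
  have hP' : ∀ᶠ t in r, ∀ᶠ s in q, ∀ᶠ a in p, t * (s * a) ∈ P := by
    rw [← hr] at hP
    exact hP
  exact hP'.exists

theorem eventually_mem_and_eventually_mul_mem {M : Type*} [Semigroup M] {p : Ultrafilter M}
    (hp : IsIdempotentElem p) {Q : Set M} (hQ : Q ∈ p) :
    ∀ᶠ v in p, v ∈ Q ∧ ∀ᶠ y in p, v * y ∈ Q := by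
  have hQQ : Q ∈ p * p := hp.eq.symm ▸ hQ
  exact Eventually.and hQ hQQ

theorem exists_prod_line_eq_mul_prod {ι κ M : Type*} [Fintype ι] [CommMonoid M]
    (l : Combinatorics.Line κ ι) (y : ι → κ → M) :
    ∃ b, ∃ H : Finset ι, H.Nonempty ∧ ∀ k, ∏ i, y i (l k i) = b * ∏ i ∈ H, y i k := by
  classical
  refine ⟨∏ i with l.idxFun i ≠ none, (l.idxFun i).elim 1 (y i),
    ({i | l.idxFun i = none} : Finset ι), ?_, fun k => ?_⟩
  · obtain ⟨i, hi⟩ := l.proper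
    exact ⟨i, by simpa using hi⟩
  · rw [← Finset.prod_filter_not_mul_prod_filter _ (fun i => l.idxFun i = none)]
    congr 1
    · refine Finset.prod_congr rfl fun i hi => ?_
      obtain ⟨k', hk'⟩ := Option.ne_none_iff_exists'.1 (Finset.mem_filter.1 hi).2
      rw [l.apply_some hk', hk', Option.elim_some]
    · refine Finset.prod_congr rfl fun i hi => ?_
      rw [l.apply_none k i (Finset.mem_filter.1 hi).2]

variable {M : Type*} [CommMonoid M] {p : Ultrafilter M} {C : Set M}

/-- Members of an ultrafilter in a minimal left ideal are J-sets. -/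
theorem exists_forall_mul_prod_mem {L : SubMulAction (Ultrafilter M) (Ultrafilter M)}
    (hL : IsAtom L) (hp : p ∈ L) {P : Set M} (hP : P ∈ p) {κ : Type*} [Finite κ]
    (y : ℕ → κ → M) :
    ∃ a, ∃ H : Finset ℕ, H.Nonempty ∧ ∀ k, a * ∏ n ∈ H, y n k ∈ P := by
  obtain ⟨G, hG⟩ := exists_finset_forall_eventually_mul_mul_mem hL hp hP
  obtain ⟨ι, _, hι⟩ := Combinatorics.Line.exists_mono_in_high_dimension κ G
  obtain ⟨e, he⟩ := exists_injective_nat ι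
  choose color color_mem hcolor using fun w : ι → κ => hG (∏ i, y (e i) (w i))
  obtain ⟨a, ha⟩ := (eventually_all.2 hcolor).exists
  obtain ⟨l, t, ht⟩ := hι fun w => ⟨color w, color_mem w⟩
  obtain ⟨b, H, hH, hl⟩ := exists_prod_line_eq_mul_prod l fun i => y (e i)
  refine ⟨t * (b * a), H.map ⟨e, he⟩, hH.map, fun k => ?_⟩
  have hk : color (l k) = t := congrArg Subtype.val (ht k)
  have hmem := ha (l k)
  rw [hk, hl, mul_right_comm, ← mul_assoc] at hmem
  rwa [Finset.prod_map]

theorem prod_mem_of_forall_mul_mem {Q : ℕ → Set M} (hQ : Antitone Q) {f : ℕ → M} {H : Finset ℕ}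
    (hH : H.Nonempty) (hf : ∀ n ∈ H, f n ∈ Q n ∧ ∀ y ∈ Q (n + 1), f n * y ∈ Q n) {m : ℕ}
    (hm : ∀ n ∈ H, m ≤ n) : ∏ n ∈ H, f n ∈ Q m := by
  induction H using Finset.induction_on_min generalizing m with
  | empty => exact absurd hH Finset.not_nonempty_empty
  | insert a s ha ih =>
    refine hQ (hm a (Finset.mem_insert_self a s)) ?_
    obtain ⟨hfa, hfa_mul⟩ := hf a (Finset.mem_insert_self a s)
    rw [Finset.prod_insert fun has => (ha a has).false]
    rcases s.eq_empty_or_nonempty with rfl | hs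
    · simpa using hfa
    · exact hfa_mul _ (ih hs (fun n hn => hf n (Finset.mem_insert_of_mem hn)) ha)

theorem exists_seq_forall_prod_mem (hp : IsIdempotentElem p) (hC : C ∈ p) {X : ℕ → Type*}
    {F : ∀ n, X n → Set M} (hfin : ∀ n x, (F n x).Finite)
    (hF : ∀ n, ∀ Q ∈ p, ∃ x, F n x ⊆ Q) :
    ∃ x : ∀ n, X n, ∀ (H : Finset ℕ) (f : ℕ → M), H.Nonempty →
      (∀ n ∈ H, f n ∈ F n (x n)) → ∏ n ∈ H, f n ∈ C := by
  choose x hx using fun n (Q : {Q : Set M // Q ∈ p}) =>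
    hF n _ (eventually_mem_and_eventually_mul_mem hp Q.2)
  let next (n : ℕ) (Q : {Q : Set M // Q ∈ p}) : {Q : Set M // Q ∈ p} :=
    ⟨Q.1 ∩ ⋂ v ∈ F n (x n Q), {y | v * y ∈ Q.1},
      inter_mem Q.2 ((biInter_mem (hfin n _)).2 fun v hv => (hx n Q hv).2)⟩
  let Q (n : ℕ) : {Q : Set M // Q ∈ p} := Nat.rec ⟨C, hC⟩ next n
  have hanti : Antitone fun n => (Q n).1 := antitone_nat_of_succ_le fun n => Set.inter_subset_left
  refine ⟨fun n => x n (Q n), fun H f hH hf => ?_⟩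
  refine prod_mem_of_forall_mul_mem (m := 0) hanti hH (fun n hn => ⟨(hx n _ (hf n hn)).1, ?_⟩)
    fun n _ => n.zero_le
  intro y hy
  exact Set.mem_iInter₂.1 hy.2 _ (hf n hn)

/-- The rows of a monic first entries matrix: the leftmost nonzero entry exists and equals `1`. -/
def HasFirstEntryOne {v : ℕ} (r : Fin v → ℕ) : Prop :=
  ∃ j, r j = 1 ∧ ∀ j' < j, r j' = 0

theorem HasFirstEntryOne.head_eq_zero_or_one {v : ℕ} {r : Fin (v + 1) → ℕ}
    (hr : HasFirstEntryOne r) : r 0 = 0 ∨ r 0 = 1 := by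
  obtain ⟨j, hj, hlt⟩ := hr
  rcases eq_or_ne j 0 with rfl | hj0
  · exact Or.inr hj
  · exact Or.inl (hlt 0 (Fin.pos_iff_ne_zero.2 hj0))

theorem HasFirstEntryOne.of_cons_zero {v : ℕ} {r : Fin v → ℕ}
    (hr : HasFirstEntryOne (Fin.cons 0 r : Fin (v + 1) → ℕ)) : HasFirstEntryOne r := by
  obtain ⟨j, hj, hlt⟩ := hr
  obtain ⟨k, rfl⟩ := Fin.exists_succ_eq.2 (show j ≠ 0 by rintro rfl; simp at hj)
  exact ⟨k, hj, fun j' hj' => hlt j'.succ (Fin.succ_lt_succ_iff.2 hj')⟩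

theorem exists_forall_prod_pow_mem (hp : IsIdempotentElem p)
    {L : SubMulAction (Ultrafilter M) (Ultrafilter M)} (hL : IsAtom L) (hpL : p ∈ L) {v : ℕ}
    {R : Set (Fin v → ℕ)} (hfin : R.Finite) (hR : ∀ r ∈ R, HasFirstEntryOne r) {P : Set M}
    (hP : P ∈ p) : ∃ x : Fin v → M, ∀ r ∈ R, ∏ j, x j ^ r j ∈ P := by
  induction v generalizing P with
  | zero => exact ⟨1, fun r hr => (hR r hr).choose.elim0⟩
  | succ v ih =>
    let R₀ : Set (Fin v → ℕ) := {r | Fin.cons 0 r ∈ R}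
    have hfin₀ : R₀.Finite := hfin.preimage (Fin.cons_right_injective 0).injOn
    obtain ⟨y, hy⟩ := exists_seq_forall_prod_mem hp hP
      (F := fun _ (x : Fin v → M) => (fun r => ∏ j, x j ^ r j) '' R₀)
      (fun _ _ => hfin₀.image _) fun _ Q hQ => by
        obtain ⟨x, hx⟩ := ih hfin₀ (fun r hr => (hR _ hr).of_cons_zero) hQ
        exact ⟨x, Set.image_subset_iff.2 hx⟩
    have := hfin.to_subtype
    obtain ⟨a, H, hH, ha⟩ := exists_forall_mul_prod_mem hL hpL hP
      fun n (r : R) => ∏ j, y n j ^ Fin.tail r.1 j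
    refine ⟨Fin.cons a (∏ n ∈ H, y n), fun r hr => ?_⟩
    have hprod : ∏ j, (Fin.cons a (∏ n ∈ H, y n) : Fin (v + 1) → M) j ^ r j =
        a ^ r 0 * ∏ n ∈ H, ∏ j, y n j ^ Fin.tail r j := by
      simp only [Fin.prod_univ_succ, Fin.cons_zero, Fin.cons_succ, Finset.prod_apply, Fin.tail,
        ← Finset.prod_pow]
      rw [Finset.prod_comm]
    rw [hprod]
    rcases (hR r hr).head_eq_zero_or_one with h0 | h1
    · rw [h0, pow_zero, one_mul]
      have htail : Fin.tail r ∈ R₀ := by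
        simpa only [R₀, Set.mem_ofPred_eq, ← h0, Fin.cons_self_tail] using hr
      exact hy H _ hH fun n _ => ⟨_, htail, rfl⟩
    · rw [h1, pow_one]
      exact ha ⟨r, hr⟩

theorem finprod_sigma_eq_prod {ι : Type*} {β : ι → Type*} [∀ i, Fintype (β i)]
    {f : (Σ i, β i) → M} {H : Finset ι} (hf : ∀ s, f s ≠ 1 → s.1 ∈ H) :
    ∏ᶠ s, f s = ∏ i ∈ H, ∏ b, f ⟨i, b⟩ := by
  rw [finprod_eq_prod_of_mulSupport_subset f (s := H.sigma fun _ => Finset.univ), Finset.prod_sigma]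
  exact fun s hs => by simpa using hf s hs

/-- The set of nonzero rows of the `n`-th block of a matrix whose columns are grouped into finite
blocks. -/
def blockRows {ι : Type*} {d : ℕ → ℕ} (A : ι → (Σ n, Fin (d n)) → ℕ) (n : ℕ) :
    Set (Fin (d n) → ℕ) :=
  {r | r ≠ 0 ∧ ∃ i, r = fun t => A i ⟨n, t⟩}

theorem IsCentralSet.exists_forall_finprod_pow_mem (hC : IsCentralSet C) {ι : Type*}
    {d : ℕ → ℕ} {A : ι → (Σ n, Fin (d n)) → ℕ} (hne : ∀ i, A i ≠ 0)
    (hrow : ∀ i, (Function.support (A i)).Finite) (hfin : ∀ n, (blockRows A n).Finite)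
    (hone : ∀ n, ∀ r ∈ blockRows A n, HasFirstEntryOne r) :
    ∃ x : (Σ n, Fin (d n)) → M, ∀ i, ∏ᶠ s, x s ^ A i s ∈ C := by
  classical
  obtain ⟨p, hp, ⟨L, hL, hpL⟩, hCp⟩ := hC
  obtain ⟨x, hx⟩ := exists_seq_forall_prod_mem hp hCp
    (F := fun n (x : Fin (d n) → M) => (fun r => ∏ t, x t ^ r t) '' blockRows A n)
    (fun n _ => (hfin n).image _) fun n Q hQ => by
      obtain ⟨x, hx⟩ := exists_forall_prod_pow_mem hp hL hpL (hfin n) (hone n) hQ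
      exact ⟨x, Set.image_subset_iff.2 hx⟩
  refine ⟨fun s => x s.1 s.2, fun i => ?_⟩
  let H : Finset ℕ := (hrow i).toFinset.image Sigma.fst
  have mem_H {s : Σ n, Fin (d n)} (hs : A i s ≠ 0) : s.1 ∈ H :=
    Finset.mem_image_of_mem _ ((hrow i).mem_toFinset.2 hs)
  rw [finprod_sigma_eq_prod fun s hs => mem_H fun h0 => hs (by rw [h0, pow_zero])]
  obtain ⟨s, hs⟩ := Function.ne_iff.1 (hne i)
  refine hx H _ ⟨s.1, mem_H hs⟩ fun n hn => ⟨_, ⟨?_, i, rfl⟩, rfl⟩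
  obtain ⟨⟨n, t⟩, hnt, rfl⟩ := Finset.mem_image.1 hn
  exact Function.ne_iff.2 ⟨t, (hrow i).mem_toFinset.1 hnt⟩

theorem bijective_sigma_fin_add_of_strictMono {α : ℕ → ℕ} (h0 : α 0 = 0) (hα : StrictMono α) :
    Function.Bijective fun s : Σ n, Fin (α (n + 1) - α n) => α s.1 + s.2 := by
  have mem_Ico (s : Σ n, Fin (α (n + 1) - α n)) :
      α s.1 + s.2 ∈ Set.Ico (α s.1) (α (s.1 + 1)) :=
    ⟨Nat.le_add_right _ _, by omega⟩
  constructor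
  · rintro ⟨m, s⟩ ⟨n, t⟩ (hst : α m + s = α n + t)
    obtain rfl : m = n := hα.monotone.pairwise_disjoint_on_Ico_succ.eq
      (Set.not_disjoint_iff.2 ⟨_, mem_Ico ⟨m, s⟩, hst ▸ mem_Ico ⟨n, t⟩⟩)
    obtain rfl : s = t := Fin.ext (Nat.add_left_cancel hst)
    rfl
  · intro j
    have hj : j ∈ ⋃ n, Set.Ico (α n) (α (Order.succ n)) := by
      rw [iUnion_Ico_map_succ_eq_Ici (fun n => hα.monotone bot_le)
        hα.not_bddAbove_range_of_wellFoundedLT, Set.mem_Ici, bot_eq_zero, h0]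
      exact j.zero_le
    obtain ⟨n, hle, hlt⟩ := Set.mem_iUnion.1 hj
    exact ⟨⟨n, j - α n, Nat.sub_lt_sub_right hle hlt⟩, Nat.add_sub_cancel' hle⟩

theorem IsMonic.hasFirstEntryOne {u v : ℕ} {F : Fin u → Fin v → ℚ} (hF : IsMonic F)
    {r : Fin v → ℕ} (hr : r ≠ 0) (hrF : (fun t => (r t : ℚ)) ∈ Set.range F) :
    HasFirstEntryOne r := by
  obtain ⟨k, hk⟩ := hrF
  obtain ⟨j, hj, hmin⟩ := exists_minimal_of_wellFoundedLT (fun j => r j ≠ 0) (Function.ne_iff.1 hr)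
  have hlt (j') (hj' : j' < j) : r j' = 0 := not_not.1 fun h => hj'.not_ge (hmin h hj'.le)
  have hone := hF k j ⟨by simpa [hk] using hj, fun j' hj' => by simp [hk, hlt j' hj']⟩
  exact ⟨j, by simpa [hk] using hone, hlt⟩

theorem finite_of_forall_natCast_comp_mem {κ : Type*} {R : Set (κ → ℕ)} {S : Set (κ → ℚ)}
    (hS : S.Finite) (hRS : ∀ r ∈ R, (fun t => (r t : ℚ)) ∈ S) : R.Finite :=
  hS.of_injOn hRS fun _ _ _ _ h => funext fun t => Nat.cast_injective (congrFun h t)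

theorem stmt_10_general (A : ℕ → ℕ → ℕ) (hA : MonicSegmentedFE fun i j => (A i j : ℚ))
    (hC : IsCentralSet C) : ∃ x : ℕ → M, ∀ i, ∏ᶠ j, x j ^ A i j ∈ C := by
  obtain ⟨hne, hrow, α, hα0, hα, hblocks⟩ := hA
  let e := Equiv.ofBijective _ (bijective_sigma_fin_add_of_strictMono hα0 hα)
  let B (i : ℕ) (s : Σ n, Fin (α (n + 1) - α n)) : ℕ := A i (e s)
  have hB_ne (i) : B i ≠ 0 := by
    obtain ⟨j, hj⟩ := hne i
    exact Function.ne_iff.2 ⟨e.symm j, by simpa [B] using hj⟩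
  have hB_row (i) : (Function.support (B i)).Finite :=
    Set.Finite.preimage (s := Function.support (A i)) e.injective.injOn
      ((hrow i).subset fun j hj => Nat.cast_ne_zero.2 hj)
  have hB_block (n) : (blockRows B n).Finite ∧ ∀ r ∈ blockRows B n, HasFirstEntryOne r := by
    obtain ⟨u, F, -, -, hmonic, hF⟩ := hblocks n
    have hrF : ∀ r ∈ blockRows B n, (fun t => (r t : ℚ)) ∈ Set.range F := by
      rintro _ ⟨hr, i, rfl⟩
      exact hF ▸ ⟨fun h => hr (funext fun t => Nat.cast_injective (congrFun h t)), i, rfl⟩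
    exact ⟨finite_of_forall_natCast_comp_mem (Set.finite_range F) hrF,
      fun r hr => hmonic.hasFirstEntryOne hr.1 (hrF r hr)⟩
  obtain ⟨x, hx⟩ := hC.exists_forall_finprod_pow_mem hB_ne hB_row (fun n => (hB_block n).1)
    fun n => (hB_block n).2
  refine ⟨x ∘ e.symm, fun i => ?_⟩
  rw [← finprod_comp_equiv e]
  simpa only [Function.comp_apply, e.symm_apply_apply] using hx i

theorem umul_eq_mul (p q : Ultrafilter ℕ+) : umul p q = p * q := rfl

theorem IsMinimalLeftIdealMul.exists_isAtom {L : Set (Ultrafilter ℕ+)}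
    (hL : IsMinimalLeftIdealMul L) :
    ∃ L' : SubMulAction (Ultrafilter ℕ+) (Ultrafilter ℕ+), IsAtom L' ∧ (L' : Set _) = L := by
  obtain ⟨⟨⟨q, hq⟩, hmul⟩, hmin⟩ := hL
  have mul_mem (r : Ultrafilter ℕ+) {s : Ultrafilter ℕ+} (hs : s ∈ L) : r * s ∈ L :=
    umul_eq_mul r s ▸ hmul r s hs
  refine ⟨⟨L, mul_mem⟩, ⟨?_, fun N hN => ?_⟩, rfl⟩
  · exact fun h => (SetLike.ext_iff.1 h q).1 hq
  · by_contra hN_ne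
    have hN_nonempty : (N : Set (Ultrafilter ℕ+)).Nonempty :=
      Set.nonempty_iff_ne_empty.2 fun h => hN_ne (SetLike.coe_injective h)
    have hN_ideal : IsLeftIdealMul N :=
      ⟨hN_nonempty, fun r s hs => umul_eq_mul r s ▸ N.smul_mem r hs⟩
    exact hN.ne (SetLike.coe_injective (hmin N hN_ideal hN.le))

theorem IsCentralMul.isCentralSet {C : Set ℕ+} (hC : IsCentralMul C) : IsCentralSet C := by
  obtain ⟨p, hp, ⟨L, hL, hpL⟩, hCp⟩ := hC
  obtain ⟨L', hL', rfl⟩ := hL.exists_isAtom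
  exact ⟨p, (umul_eq_mul p p).symm.trans hp, ⟨L', hL', hpL⟩, hCp⟩

end Central

/-- Lemma 3.5: if `A` is an `ω×ω` monic segmented first entries
matrix with entries from `ω` and `C` is central in `(ℕ,·)`, then there is
`x ∈ ℕ^ω` with every entry of `x^A` (where `(x^A)_i = ∏_j x_j ^ A i j`) in `C`. -/
theorem stmt_10 (A : ℕ → ℕ → ℕ)
    (hA : MonicSegmentedFE fun i j => (A i j : ℚ))
    (C : Set ℕ+) (hC : IsCentralMul C) :
    ∃ x : ℕ → ℕ+, ∀ i, (∏ᶠ j, (x j) ^ (A i j)) ∈ C := by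
  exact stmt_10_general A hA hC.isCentralSet
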